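/- Let A be a commutative ring, let M be a flat A-module, let N be an A-module and let d ≥ 0 be an integer. Let f be a polynomial law from M to N (a family of maps f_B : M ⊗_A B → N ⊗_A B, for B ranging over commutative A-algebras, natural in B) which is homogeneous of degree d, i.e. f_B(λ·m) = λ^d · f_B(m) for every A-algebra B, every λ ∈ B and every m ∈ M ⊗_A B. Then there exists a unique A-linear map f̃ : TS^d_A(M) → N with the following property: for every commutative A-algebra B and every m ∈ M ⊗_A B, one has (f̃ ⊗ id_B)(x_m) = f_B(m), where x_m is the unique element of TS^d_A(M) ⊗_A B whose image under the canonical base-change isomorphism TS^d_A(M) ⊗_A B ≅ TS^d_B(M ⊗_A B) (which is bijective because M is flat) is the symmetric tensor m^{⊗ d} = m ⊗ ⋯ ⊗ m ∈ TS^d_B(M ⊗_A B). -/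

import Mathlib

/-!
Tensors over a flat module behave like tensors over its finite free approximations. If
`φ : Aⁿ → M` kills a tensor in `(Aⁿ)^{⊗ d}`, even after tensoring with coefficients, then `φ`
factors through a finite free module in which that tensor already dies: peel off one tensor factor
at a time, treating the others as coefficients, and apply the equational criterion for flatness.
Hence every element of `TS^d(M)` comes from some `TS^d(Aⁿ)`, relations between such elements already
hold at a finite free stage, and the base-change map of symmetric tensors is injective.

For `K` free on `b₁, …, bₙ`, a law `f` is determined by its value at the generic element `∑ Xᵢ ⊗ bᵢ`
of `A[X] ⊗ K`. Comparing coefficients of `T ^ d` after `Xᵢ ↦ T Xᵢ` shows that this value is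
`∑ X^s ⊗ ν_s` over the monomials `X^s` of degree `d`. The orbit sums of the tensors
`b_{w 1} ⊗ ⋯ ⊗ b_{w d}` form a basis `γ_s` of `TS^d(K)`, and the `d`-th tensor power of the generic
element is `∑ X^s ⊗ γ_s`; so the map sought is `γ_s ↦ ν_s`, and there is no other choice. By this
uniqueness, the maps obtained from the pullbacks of `f` along all `Aⁿ → M` are compatible, and they
glue to `TS^d(M) → N`.
-/

open scoped TensorProduct

/-- The `d`-th tensor power `M^{⊗_A d}` of an `A`-module `M`. -/
abbrev TensorPow (A : Type*) [CommRing A] (M : Type*) [AddCommGroup M] [Module A M] (d : ℕ) :=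
  PiTensorProduct A (fun _ : Fin d => M)

/-- The submodule `TS^d_A(M)` of symmetric tensors of degree `d`: the tensors in `M^{⊗_A d}`
fixed by the permutation action of the symmetric group `𝔖_d` on the `d` tensor factors. -/
def symmetricTensors (A : Type*) [CommRing A] (M : Type*) [AddCommGroup M] [Module A M]
    (d : ℕ) : Submodule A (TensorPow A M d) where
  carrier := {x | ∀ σ : Equiv.Perm (Fin d), PiTensorProduct.reindex A (fun _ => M) σ x = x}
  add_mem' := by
    intro a b ha hb σ
    simp only [map_add, ha σ, hb σ]
  zero_mem' := by
    intro σ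
    simp
  smul_mem' := by
    intro c x hx σ
    simp only [map_smul, hx σ]

/-- The canonical comparison map `M^{⊗_A d} → (B ⊗_A M)^{⊗_B d}`, sending a pure tensor
`m_1 ⊗ ⋯ ⊗ m_d` to `(1 ⊗ m_1) ⊗ ⋯ ⊗ (1 ⊗ m_d)`. -/
noncomputable def tensorPowCompare (A : Type*) [CommRing A] (M : Type*) [AddCommGroup M]
    [Module A M] (d : ℕ) (B : Type*) [CommRing B] [Algebra A B] :
    TensorPow A M d →ₗ[A] TensorPow B (B ⊗[A] M) d :=
  PiTensorProduct.lift
    (((PiTensorProduct.tprod B (s := fun _ : Fin d => B ⊗[A] M)).restrictScalars A).compLinearMap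
      (fun _ => TensorProduct.mk A B M 1))

/-- The canonical base-change map `B ⊗_A TS^d_A(M) → (B ⊗_A M)^{⊗_B d}`, sending
`b ⊗ (m_1 ⊗ ⋯ ⊗ m_d)` to `b • ((1 ⊗ m_1) ⊗ ⋯ ⊗ (1 ⊗ m_d))`; its corestriction to
`TS^d_B(B ⊗_A M)` is the canonical base-change comparison map of symmetric tensors. -/
noncomputable def symmetricTensorsBaseChange (A : Type*) [CommRing A] (M : Type*)
    [AddCommGroup M] [Module A M] (d : ℕ) (B : Type*) [CommRing B] [Algebra A B] :
    B ⊗[A] (symmetricTensors A M d) →ₗ[B] TensorPow B (B ⊗[A] M) d :=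
  LinearMap.liftBaseChange B
    ((tensorPowCompare A M d B) ∘ₗ (symmetricTensors A M d).subtype)

universe u

open TensorProduct

section Functoriality

variable {A : Type*} [CommRing A] {M M' M'' : Type*} [AddCommGroup M] [Module A M]
  [AddCommGroup M'] [Module A M'] [AddCommGroup M''] [Module A M''] {d : ℕ}

/-- The map `φ^{⊗ d} : M^{⊗ d} → M'^{⊗ d}` induced by a linear map `φ : M → M'`. -/
noncomputable abbrev tensorPowMap (d : ℕ) (φ : M →ₗ[A] M') :
    TensorPow A M d →ₗ[A] TensorPow A M' d :=
  PiTensorProduct.map fun _ => φ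

lemma tensorPowMap_comp (ψ : M' →ₗ[A] M'') (φ : M →ₗ[A] M') :
    tensorPowMap d (ψ ∘ₗ φ) = tensorPowMap d ψ ∘ₗ tensorPowMap d φ :=
  PiTensorProduct.map_comp _ _

lemma tensorPowMap_reindex (φ : M →ₗ[A] M') (σ : Equiv.Perm (Fin d)) (t : TensorPow A M d) :
    tensorPowMap d φ (PiTensorProduct.reindex A (fun _ => M) σ t) =
      PiTensorProduct.reindex A (fun _ => M') σ (tensorPowMap d φ t) :=
  PiTensorProduct.map_reindex (fun _ => φ) σ t

/-- The map `TS^d(M) → TS^d(M')` induced by a linear map `φ : M → M'`. -/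
noncomputable def symmetricTensors.map (d : ℕ) (φ : M →ₗ[A] M') :
    symmetricTensors A M d →ₗ[A] symmetricTensors A M' d :=
  (tensorPowMap d φ).restrict fun t ht σ =>
    (tensorPowMap_reindex φ σ t).symm.trans (congrArg _ (ht σ))

lemma symmetricTensors.coe_map (φ : M →ₗ[A] M') (t : symmetricTensors A M d) :
    (symmetricTensors.map d φ t : TensorPow A M' d) = tensorPowMap d φ t := rfl

lemma symmetricTensors.subtype_comp_map (φ : M →ₗ[A] M') :
    (symmetricTensors A M' d).subtype ∘ₗ symmetricTensors.map d φ =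
      tensorPowMap d φ ∘ₗ (symmetricTensors A M d).subtype := rfl

lemma symmetricTensors.map_comp (ψ : M' →ₗ[A] M'') (φ : M →ₗ[A] M') :
    symmetricTensors.map d (ψ ∘ₗ φ) = symmetricTensors.map d ψ ∘ₗ symmetricTensors.map d φ := by
  ext t
  simp only [symmetricTensors.coe_map, tensorPowMap_comp, LinearMap.comp_apply]

variable (B : Type*) [CommRing B] [Algebra A B]

lemma tensorPowCompare_tprod (v : Fin d → M) :
    tensorPowCompare A M d B (PiTensorProduct.tprod A v) =
      PiTensorProduct.tprod B fun i => (1 : B) ⊗ₜ[A] v i := by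
  simp [tensorPowCompare]

lemma symmetricTensorsBaseChange_tmul (b : B) (t : symmetricTensors A M d) :
    symmetricTensorsBaseChange A M d B (b ⊗ₜ t) = b • tensorPowCompare A M d B t := by
  simp [symmetricTensorsBaseChange]

lemma tensorPowCompare_map (φ : M →ₗ[A] M') (t : TensorPow A M d) :
    tensorPowCompare A M' d B (tensorPowMap d φ t) =
      tensorPowMap d (φ.baseChange B) (tensorPowCompare A M d B t) := by
  have : tensorPowCompare A M' d B ∘ₗ tensorPowMap d φ =
      (tensorPowMap d (φ.baseChange B)).restrictScalars A ∘ₗ tensorPowCompare A M d B := by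
    ext v
    simp [tensorPowCompare_tprod]
  exact LinearMap.congr_fun this t

lemma symmetricTensorsBaseChange_map (φ : M →ₗ[A] M') (x : B ⊗[A] symmetricTensors A M d) :
    symmetricTensorsBaseChange A M' d B ((symmetricTensors.map d φ).baseChange B x) =
      tensorPowMap d (φ.baseChange B) (symmetricTensorsBaseChange A M d B x) := by
  induction x using TensorProduct.induction_on with
  | zero => simp only [map_zero]
  | tmul b t =>
    simp only [LinearMap.baseChange_tmul, symmetricTensorsBaseChange_tmul,
      symmetricTensors.coe_map, tensorPowCompare_map, map_smul]
  | add x y hx hy => simp only [map_add, hx, hy]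

lemma symmetricTensorsBaseChange_eq_liftBaseChange (x : B ⊗[A] symmetricTensors A M d) :
    symmetricTensorsBaseChange A M d B x =
      (tensorPowCompare A M d B).liftBaseChange B
        ((symmetricTensors A M d).subtype.baseChange B x) := by
  induction x using TensorProduct.induction_on with
  | zero => simp only [map_zero]
  | tmul b t => simp [symmetricTensorsBaseChange_tmul]
  | add x y hx hy => simp only [map_add, hx, hy]

/-- The projection `T(M) → M^{⊗ d}` of the tensor algebra onto its degree `d` part. -/
noncomputable def tensorAlgebraComponent (A M : Type*) [CommRing A] [AddCommGroup M] [Module A M]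
    (d : ℕ) : TensorAlgebra A M →ₗ[A] TensorPow A M d :=
  DirectSum.component A ℕ (fun n => TensorPow A M n) d ∘ₗ
    (TensorAlgebra.toDirectSum (R := A) (M := M)).toLinearMap

lemma tensorAlgebraComponent_tprod (v : Fin d → M) :
    tensorAlgebraComponent A M d (TensorAlgebra.tprod A M d v) = PiTensorProduct.tprod A v := by
  simp only [tensorAlgebraComponent, LinearMap.comp_apply, AlgHom.toLinearMap_apply,
    TensorAlgebra.toDirectSum_tensorPower_tprod]
  exact DirectSum.component.lof_self _ _ _

/-- Multiplying in `B ⊗ T(M)` and projecting to degree `d` inverts the comparison map. -/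
lemma liftBaseChange_tensorPowCompare_injective :
    Function.Injective ((tensorPowCompare A M d B).liftBaseChange B) := by
  let mulι : TensorPow B (B ⊗[A] M) d →ₗ[B] B ⊗[A] TensorAlgebra A M :=
    PiTensorProduct.lift <| (MultilinearMap.mkPiAlgebraFin B d _).compLinearMap fun _ =>
      (TensorAlgebra.ι A).baseChange B
  have mulι_one_tmul (v : Fin d → M) : mulι (PiTensorProduct.tprod B fun i => 1 ⊗ₜ v i) =
      1 ⊗ₜ TensorAlgebra.tprod A M d v := by
    simp only [mulι, PiTensorProduct.lift.tprod, MultilinearMap.compLinearMap_apply,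
      MultilinearMap.mkPiAlgebraFin_apply, LinearMap.baseChange_tmul, TensorAlgebra.tprod_apply]
    rw [← Algebra.TensorProduct.includeRight_apply, map_list_prod]
    simp only [List.map_ofFn, Function.comp_def, Algebra.TensorProduct.includeRight_apply]
  have left_inverse : ((tensorAlgebraComponent A M d).baseChange B ∘ₗ mulι) ∘ₗ
      (tensorPowCompare A M d B).liftBaseChange B = LinearMap.id := by
    ext v
    simp [-TensorAlgebra.tprod_apply, tensorPowCompare_tprod, mulι_one_tmul,
      tensorAlgebraComponent_tprod]
  exact LinearMap.injective_of_comp_eq_id _ _ left_inverse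

end Functoriality

section Kernels

variable {A : Type u} [CommRing A] {M : Type*} [AddCommGroup M] [Module A M]

lemma exists_factorization_lTensor_eq_zero [Module.Flat A M] {P : Type*} [AddCommGroup P]
    [Module A P] {n : ℕ} (φ : (Fin n →₀ A) →ₗ[A] M) (z : P ⊗[A] (Fin n →₀ A))
    (hz : φ.lTensor P z = 0) :
    ∃ (k : ℕ) (u : (Fin n →₀ A) →ₗ[A] (Fin k →₀ A)) (ψ : (Fin k →₀ A) →ₗ[A] M),
      φ = ψ ∘ₗ u ∧ u.lTensor P z = 0 := by
  obtain ⟨p, rfl⟩ := TensorProduct.eq_repr_basis_right Finsupp.basisSingleOne z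
  simp only [Finsupp.sum_fintype, zero_tmul, implies_true, map_sum, LinearMap.lTensor_tmul,
    Finsupp.coe_basisSingleOne] at hz ⊢
  obtain ⟨k, a, y, hφ, ha⟩ := vanishesTrivially_of_sum_tmul_eq_zero_of_rTensor_injective A
    (Module.Flat.rTensor_preserves_injective_linearMap _ (Submodule.injective_subtype _)) hz
  refine ⟨k, Finsupp.linearCombination A fun i => ∑ j, Finsupp.single j (a i j),
    Finsupp.linearCombination A y, ?_, ?_⟩
  · ext i
    simp [hφ]
  · have single_eq_smul (i : Fin n) (j : Fin k) :
        Finsupp.single j (a i j) = a i j • Finsupp.single j (1 : A) := by simp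
    simp only [Finsupp.linearCombination_single, one_smul, tmul_sum, single_eq_smul, tmul_smul,
      smul_tmul']
    rw [Finset.sum_comm]
    simp only [← sum_tmul, ha, zero_tmul, Finset.sum_const_zero]

lemma rightComm_rTensor_lTensor {P T V W : Type*} [AddCommGroup P] [Module A P] [AddCommGroup T]
    [Module A T] [AddCommGroup V] [Module A V] [AddCommGroup W] [Module A W] (φ : V →ₗ[A] W)
    (z : (P ⊗[A] V) ⊗[A] T) :
    TensorProduct.rightComm A P W T ((φ.lTensor P).rTensor T z) =
      φ.lTensor (P ⊗[A] T) (TensorProduct.rightComm A P V T z) := by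
  have : (TensorProduct.rightComm A P W T).toLinearMap ∘ₗ (φ.lTensor P).rTensor T =
      φ.lTensor (P ⊗[A] T) ∘ₗ (TensorProduct.rightComm A P V T).toLinearMap := by
    ext p v t
    rfl
  exact LinearMap.congr_fun this z

lemma exists_factorization_rTensor_lTensor_eq_zero [Module.Flat A M] {P T : Type*}
    [AddCommGroup P] [Module A P] [AddCommGroup T] [Module A T] {n : ℕ}
    (φ : (Fin n →₀ A) →ₗ[A] M) (z : (P ⊗[A] (Fin n →₀ A)) ⊗[A] T)
    (hz : (φ.lTensor P).rTensor T z = 0) :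
    ∃ (k : ℕ) (u : (Fin n →₀ A) →ₗ[A] (Fin k →₀ A)) (ψ : (Fin k →₀ A) →ₗ[A] M),
      φ = ψ ∘ₗ u ∧ (u.lTensor P).rTensor T z = 0 := by
  obtain ⟨k, u, ψ, hφ, hu⟩ := exists_factorization_lTensor_eq_zero φ
    (TensorProduct.rightComm A P _ T z) (by rw [← rightComm_rTensor_lTensor, hz, map_zero])
  refine ⟨k, u, ψ, hφ, (TensorProduct.rightComm A P _ T).injective ?_⟩
  rw [rightComm_rTensor_lTensor, hu, map_zero]

/-- The isomorphism `Q ⊗ V^{⊗ (d + 1)} ≃ (Q ⊗ V) ⊗ V^{⊗ d}` moving the last tensor factor into the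
coefficients. -/
noncomputable def tensorPowSplitLast (Q V : Type*) [AddCommGroup Q] [Module A Q]
    [AddCommGroup V] [Module A V] (d : ℕ) :
    Q ⊗[A] TensorPow A V (d + 1) ≃ₗ[A] (Q ⊗[A] V) ⊗[A] TensorPow A V d :=
  (TensorPower.mulEquiv (n := d) (m := 1)).symm.lTensor Q ≪≫ₗ
    (TensorProduct.congr (.refl _ _) (PiTensorProduct.subsingletonEquiv (0 : Fin 1))).lTensor Q ≪≫ₗ
    (TensorProduct.comm A _ V).lTensor Q ≪≫ₗ (TensorProduct.assoc A Q V _).symm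

lemma tensorPowSplitLast_tmul_tprod {Q V : Type*} [AddCommGroup Q] [Module A Q]
    [AddCommGroup V] [Module A V] {d : ℕ} (q : Q) (v : Fin (d + 1) → V) :
    tensorPowSplitLast Q V d (q ⊗ₜ[A] PiTensorProduct.tprod A v) =
      (q ⊗ₜ v (Fin.last d)) ⊗ₜ PiTensorProduct.tprod A fun i : Fin d => v i.castSucc := by
  simp only [tensorPowSplitLast, TensorPower.mulEquiv, LinearEquiv.trans_symm,
    PiTensorProduct.reindex_symm, LinearEquiv.trans_apply, LinearEquiv.lTensor_tmul,
    PiTensorProduct.reindex_tprod, Equiv.symm_symm, PiTensorProduct.tmulEquiv_symm_apply,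
    finSumFinEquiv_apply_left, finSumFinEquiv_apply_right, congr_tmul, LinearEquiv.refl_apply,
    PiTensorProduct.subsingletonEquiv_apply_tprod, comm_tmul, assoc_symm_tmul]
  rfl

lemma tensorPowSplitLast_map {Q V W : Type*} [AddCommGroup Q] [Module A Q] [AddCommGroup V]
    [Module A V] [AddCommGroup W] [Module A W] {d : ℕ} (φ : V →ₗ[A] W)
    (z : Q ⊗[A] TensorPow A V (d + 1)) :
    tensorPowSplitLast Q W d ((tensorPowMap (d + 1) φ).lTensor Q z) =
      TensorProduct.map (φ.lTensor Q) (tensorPowMap d φ) (tensorPowSplitLast Q V d z) := by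
  have : (tensorPowSplitLast Q W d).toLinearMap ∘ₗ (tensorPowMap (d + 1) φ).lTensor Q =
      TensorProduct.map (φ.lTensor Q) (tensorPowMap d φ) ∘ₗ
        (tensorPowSplitLast Q V d).toLinearMap := by
    ext q v
    simp [tensorPowSplitLast_tmul_tprod]
  exact LinearMap.congr_fun this z

lemma tensorPowMap_zero_lTensor_injective {Q V W : Type*} [AddCommGroup Q] [Module A Q]
    [AddCommGroup V] [Module A V] [AddCommGroup W] [Module A W] (φ : V →ₗ[A] W) :
    Function.Injective ((tensorPowMap 0 φ).lTensor Q) := by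
  have map_eq : tensorPowMap 0 φ = (PiTensorProduct.isEmptyEquiv (Fin 0) ≪≫ₗ
      (PiTensorProduct.isEmptyEquiv (Fin 0)).symm).toLinearMap := by
    ext v
    simp [Subsingleton.elim (fun i => φ (v i)) isEmptyElim]
  rw [map_eq]
  exact (LinearEquiv.lTensor Q _).injective

/-- The induction on `d` needs arbitrary coefficients `Q`, because it moves tensor factors one by
one into them. -/
lemma exists_factorization_lTensor_tensorPowMap_eq_zero [Module.Flat A M] {d : ℕ} {Q : Type u}
    [AddCommGroup Q] [Module A Q] {n : ℕ} (φ : (Fin n →₀ A) →ₗ[A] M)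
    (z : Q ⊗[A] TensorPow A (Fin n →₀ A) d) (hz : (tensorPowMap d φ).lTensor Q z = 0) :
    ∃ (k : ℕ) (u : (Fin n →₀ A) →ₗ[A] (Fin k →₀ A)) (ψ : (Fin k →₀ A) →ₗ[A] M),
      φ = ψ ∘ₗ u ∧ (tensorPowMap d u).lTensor Q z = 0 := by
  induction d generalizing Q n with
  | zero =>
    have : z = 0 := tensorPowMap_zero_lTensor_injective φ (hz.trans (map_zero _).symm)
    exact ⟨n, LinearMap.id, φ, rfl, by rw [this, map_zero]⟩
  | succ d ih =>
    set z' := tensorPowSplitLast Q _ d z with hz'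
    have map_φ_φ : TensorProduct.map (φ.lTensor Q) (tensorPowMap d φ) z' = 0 := by
      rw [hz', ← tensorPowSplitLast_map, hz, map_zero]
    obtain ⟨k, u, ψ, rfl, map_u_φ⟩ := exists_factorization_rTensor_lTensor_eq_zero φ
      ((tensorPowMap d φ).lTensor _ z') (by
        rwa [← LinearMap.comp_apply, LinearMap.rTensor_comp_lTensor])
    obtain ⟨l, u', ψ', rfl, hu'⟩ := ih ψ
      (TensorProduct.map (u.lTensor Q) (tensorPowMap d u) z') (by
        rwa [← LinearMap.comp_apply, LinearMap.lTensor_comp_map, ← tensorPowMap_comp,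
          ← LinearMap.rTensor_comp_lTensor])
    refine ⟨l, u' ∘ₗ u, ψ', rfl, (tensorPowSplitLast Q _ d).injective ?_⟩
    rw [map_zero, tensorPowSplitLast_map, ← hz', LinearMap.lTensor_comp, tensorPowMap_comp,
      TensorProduct.map_comp, ← LinearMap.rTensor_comp_lTensor, LinearMap.comp_assoc,
      LinearMap.comp_apply, LinearMap.comp_apply, hu', map_zero]

lemma exists_factorization_tensorPowMap_eq_zero [Module.Flat A M] {d n : ℕ} {ι : Type} [Finite ι]
    (φ : (Fin n →₀ A) →ₗ[A] M) (t : ι → TensorPow A (Fin n →₀ A) d)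
    (ht : ∀ i, tensorPowMap d φ (t i) = 0) :
    ∃ (k : ℕ) (u : (Fin n →₀ A) →ₗ[A] (Fin k →₀ A)) (ψ : (Fin k →₀ A) →ₗ[A] M),
      φ = ψ ∘ₗ u ∧ ∀ i, tensorPowMap d u (t i) = 0 := by
  classical
  have := Fintype.ofFinite ι
  obtain ⟨k, u, ψ, hφ, hu⟩ := exists_factorization_lTensor_tensorPowMap_eq_zero φ
    (∑ i, Finsupp.single i (1 : A) ⊗ₜ[A] t i) (by simp [ht])
  refine ⟨k, u, ψ, hφ, fun i => ?_⟩
  have apply_coord := congrArg (TensorProduct.lid A _ ∘ (Finsupp.lapply i).rTensor _) hu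
  simpa [Finsupp.single_apply, ite_tmul] using apply_coord

end Kernels

section Lifting

variable {A : Type*} [CommRing A] {M : Type*} [AddCommGroup M] [Module A M]

lemma exists_common_factorization {n n' : ℕ} (φ : (Fin n →₀ A) →ₗ[A] M)
    (φ' : (Fin n' →₀ A) →ₗ[A] M) :
    ∃ (k : ℕ) (u : (Fin n →₀ A) →ₗ[A] (Fin k →₀ A)) (u' : (Fin n' →₀ A) →ₗ[A] (Fin k →₀ A))
      (ψ : (Fin k →₀ A) →ₗ[A] M), φ = ψ ∘ₗ u ∧ φ' = ψ ∘ₗ u' := by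
  refine ⟨n + n', Finsupp.lmapDomain A A (Fin.castAdd n'), Finsupp.lmapDomain A A (Fin.natAdd n),
    Finsupp.linearCombination A (Fin.append (fun i => φ (Finsupp.single i 1))
      fun i => φ' (Finsupp.single i 1)), ?_, ?_⟩ <;>
  · ext i
    simp

lemma exists_lTensor_apply_eq {Q : Type*} [AddCommGroup Q] [Module A Q] (z : Q ⊗[A] M) :
    ∃ (n : ℕ) (φ : (Fin n →₀ A) →ₗ[A] M) (z' : Q ⊗[A] (Fin n →₀ A)), φ.lTensor Q z' = z := by
  induction z using TensorProduct.induction_on with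
  | zero => exact ⟨0, 0, 0, map_zero _⟩
  | tmul q m =>
    exact ⟨1, Finsupp.linearCombination A fun _ => m, q ⊗ₜ Finsupp.single 0 1, by simp⟩
  | add x y hx hy =>
    obtain ⟨n, φ, x', rfl⟩ := hx
    obtain ⟨n', φ', y', rfl⟩ := hy
    obtain ⟨k, u, u', ψ, rfl, rfl⟩ := exists_common_factorization φ φ'
    exact ⟨k, ψ, u.lTensor Q x' + u'.lTensor Q y', by
      simp only [map_add, LinearMap.lTensor_comp, LinearMap.comp_apply]⟩

lemma exists_tensorPowMap_apply_eq {d : ℕ} (t : TensorPow A M d) :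
    ∃ (n : ℕ) (φ : (Fin n →₀ A) →ₗ[A] M) (t' : TensorPow A (Fin n →₀ A) d),
      tensorPowMap d φ t' = t := by
  induction t using PiTensorProduct.induction_on with
  | smul_tprod r v =>
    exact ⟨d, Finsupp.linearCombination A v,
      r • PiTensorProduct.tprod A fun i => Finsupp.single i 1, by simp⟩
  | add x y hx hy =>
    obtain ⟨n, φ, x', rfl⟩ := hx
    obtain ⟨n', φ', y', rfl⟩ := hy
    obtain ⟨k, u, u', ψ, rfl, rfl⟩ := exists_common_factorization φ φ'
    exact ⟨k, ψ, tensorPowMap d u x' + tensorPowMap d u' y', by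
      simp only [map_add, tensorPowMap_comp, LinearMap.comp_apply]⟩

end Lifting

section SymmetricTensorsLifting

variable {A : Type u} [CommRing A] {M : Type*} [AddCommGroup M] [Module A M]

lemma symmetricTensors.exists_map_apply_eq [Module.Flat A M] {d : ℕ}
    (t : symmetricTensors A M d) :
    ∃ (n : ℕ) (φ : (Fin n →₀ A) →ₗ[A] M) (t' : symmetricTensors A (Fin n →₀ A) d),
      symmetricTensors.map d φ t' = t := by
  obtain ⟨n, φ, s, hs⟩ := exists_tensorPowMap_apply_eq (t : TensorPow A M d)
  obtain ⟨k, u, ψ, rfl, hu⟩ := exists_factorization_tensorPowMap_eq_zero φ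
    (fun σ : Equiv.Perm (Fin d) => PiTensorProduct.reindex A (fun _ => _) σ s - s) fun σ => by
      rw [map_sub, tensorPowMap_reindex, hs, t.2 σ, sub_self]
  refine ⟨k, ψ, ⟨tensorPowMap d u s, fun σ => ?_⟩, Subtype.ext ?_⟩
  · rw [← tensorPowMap_reindex]
    exact sub_eq_zero.mp ((map_sub _ _ _).symm.trans (hu σ))
  · rw [symmetricTensors.coe_map, ← LinearMap.comp_apply, ← tensorPowMap_comp, hs]

lemma exists_lTensor_symmetricTensorsMap_apply_eq [Module.Flat A M] {d : ℕ} {Q : Type*}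
    [AddCommGroup Q] [Module A Q] (z : Q ⊗[A] symmetricTensors A M d) :
    ∃ (n : ℕ) (φ : (Fin n →₀ A) →ₗ[A] M) (z' : Q ⊗[A] symmetricTensors A (Fin n →₀ A) d),
      (symmetricTensors.map d φ).lTensor Q z' = z := by
  induction z using TensorProduct.induction_on with
  | zero => exact ⟨0, 0, 0, map_zero _⟩
  | tmul q t =>
    obtain ⟨n, φ, t', rfl⟩ := symmetricTensors.exists_map_apply_eq t
    exact ⟨n, φ, q ⊗ₜ t', LinearMap.lTensor_tmul _ _ _ _⟩
  | add x y hx hy =>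
    obtain ⟨n, φ, x', rfl⟩ := hx
    obtain ⟨n', φ', y', rfl⟩ := hy
    obtain ⟨k, u, u', ψ, rfl, rfl⟩ := exists_common_factorization φ φ'
    exact ⟨k, ψ, (symmetricTensors.map d u).lTensor Q x' + (symmetricTensors.map d u').lTensor Q y',
      by simp only [map_add, symmetricTensors.map_comp, LinearMap.lTensor_comp,
        LinearMap.comp_apply]⟩

end SymmetricTensorsLifting

section Words

variable {ι : Type*} {d : ℕ}

/-- The multiset of letters of a word `w` of length `d` in the alphabet `ι`, encoded as an element
of `Sym ι d`. It classifies words up to permutation of their positions. -/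
def wordSym (w : Fin d → ι) : Sym ι d :=
  ⟨Finset.univ.val.map w, by simp⟩

lemma wordSym_comp_perm (w : Fin d → ι) (σ : Equiv.Perm (Fin d)) :
    wordSym (w ∘ σ) = wordSym w := by
  refine Subtype.ext ?_
  simp only [wordSym, ← Multiset.map_map, Multiset.map_univ_val_equiv]

lemma wordSym_surjective : Function.Surjective (wordSym : (Fin d → ι) → Sym ι d) := by
  rintro ⟨⟨l⟩, rfl⟩
  exact ⟨l.get, Subtype.ext <|
    (Fin.univ_val_map l.get).trans (congrArg _ (List.ofFn_get l))⟩

lemma exists_perm_of_wordSym_eq {w w' : Fin d → ι} (h : wordSym w = wordSym w') :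
    ∃ σ : Equiv.Perm (Fin d), w' = w ∘ σ := by
  classical
  have card_fibre (v : Fin d → ι) (a : ι) :
      Fintype.card {i // v i = a} = (wordSym v : Multiset ι).count a := by
    simp only [wordSym, Sym.coe_mk, Multiset.count_map, Fintype.card_subtype, eq_comm (a := a),
      Finset.card_def, Finset.filter_val]
  have fibre_equiv (a : ι) : Nonempty ({i // w' i = a} ≃ {i // w i = a}) :=
    Fintype.card_eq.mp <| by rw [card_fibre, card_fibre, h]
  replace fibre_equiv := fun a => (fibre_equiv a).some
  refine ⟨(Equiv.sigmaFiberEquiv w').symm.trans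
    ((Equiv.sigmaCongrRight fibre_equiv).trans (Equiv.sigmaFiberEquiv w)), ?_⟩
  funext i
  exact (fibre_equiv (w' i) ⟨i, rfl⟩).2.symm

end Words

section OrbitBasis

variable {A : Type*} [CommRing A] {K : Type*} [AddCommGroup K] [Module A K] {ι : Type*} {d : ℕ}
  (b : Module.Basis ι A K)

lemma repr_reindex (σ : Equiv.Perm (Fin d)) (t : TensorPow A K d) (w : Fin d → ι) :
    (Basis.piTensorProduct fun _ : Fin d => b).repr
      (PiTensorProduct.reindex A (fun _ => K) σ t) w =
    (Basis.piTensorProduct fun _ : Fin d => b).repr t (w ∘ σ) := by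
  induction t using PiTensorProduct.induction_on with
  | smul_tprod r v =>
    rw [map_smul, (PiTensorProduct.reindex_tprod (R := A) σ v :)]
    simp only [map_smul, Finsupp.smul_apply, Basis.piTensorProduct_repr_tprod_apply]
    congr 1
    exact (Fintype.prod_equiv σ _ _ (by simp)).symm
  | add x y hx hy => simp only [map_add, Finsupp.add_apply, hx, hy]

lemma symmetricTensors.repr_eq_of_wordSym_eq (t : symmetricTensors A K d) {w w' : Fin d → ι}
    (h : wordSym w = wordSym w') :
    (Basis.piTensorProduct fun _ : Fin d => b).repr (t : TensorPow A K d) w =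
      (Basis.piTensorProduct fun _ : Fin d => b).repr (t : TensorPow A K d) w' := by
  obtain ⟨σ, rfl⟩ := exists_perm_of_wordSym_eq h
  rw [← repr_reindex, t.2 σ]

variable [Fintype ι] [DecidableEq ι]

/-- The orbit sum attached to `s : Sym ι d`: the sum of the basis tensors `b_{w 1} ⊗ ⋯ ⊗ b_{w d}`
over all words `w` with multiset of letters `s`. -/
noncomputable def orbitTensor (s : Sym ι d) : TensorPow A K d :=
  ∑ w : Fin d → ι with wordSym w = s, PiTensorProduct.tprod A (b ∘ w)

lemma repr_orbitTensor (s : Sym ι d) (w : Fin d → ι) :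
    (Basis.piTensorProduct fun _ : Fin d => b).repr (orbitTensor b s) w =
      if wordSym w = s then 1 else 0 := by
  have tprod_eq (v : Fin d → ι) :
      PiTensorProduct.tprod A (b ∘ v) = Basis.piTensorProduct (fun _ : Fin d => b) v := by
    simp [Function.comp_def]
  simp only [orbitTensor, tprod_eq, map_sum, Module.Basis.repr_self, Finsupp.finsetSum_apply,
    Finsupp.single_apply, Finset.sum_ite_eq', Finset.mem_filter_univ]

lemma linearIndependent_orbitTensor :
    LinearIndependent A (orbitTensor b : Sym ι d → TensorPow A K d) := by
  refine .of_pairwise_dual_eq_zero_one _ (fun s => (Basis.piTensorProduct fun _ : Fin d => b).coord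
    (Function.surjInv wordSym_surjective s)) (fun s s' hs => ?_) fun s => ?_
  · simp [repr_orbitTensor, Function.surjInv_eq, hs]
  · simp [repr_orbitTensor, Function.surjInv_eq]

lemma orbitTensor_mem_symmetricTensors (s : Sym ι d) :
    orbitTensor b s ∈ symmetricTensors A K d := fun σ =>
  (Basis.piTensorProduct fun _ : Fin d => b).ext_elem fun w => by
    rw [repr_reindex, repr_orbitTensor, repr_orbitTensor, wordSym_comp_perm]

lemma span_range_orbitTensor :
    Submodule.span A (Set.range (orbitTensor b : Sym ι d → _)) = symmetricTensors A K d := by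
  refine le_antisymm (Submodule.span_le.mpr ?_) fun t ht => ?_
  · rintro _ ⟨s, rfl⟩
    exact orbitTensor_mem_symmetricTensors b s
  let T := Basis.piTensorProduct fun _ : Fin d => b
  have t_eq : t = ∑ s : Sym ι d,
      T.repr t (Function.surjInv wordSym_surjective s) • orbitTensor b s := by
    refine T.ext_elem fun w => ?_
    simp only [map_sum, map_smul, Finsupp.finsetSum_apply, Finsupp.smul_apply, T,
      repr_orbitTensor, smul_eq_mul, mul_ite, mul_one, mul_zero, Finset.sum_ite_eq,
      Finset.mem_univ, if_true]
    exact symmetricTensors.repr_eq_of_wordSym_eq b ⟨t, ht⟩ (Function.surjInv_eq _ _).symm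
  rw [t_eq]
  exact Submodule.sum_mem _ fun s _ => Submodule.smul_mem _ _ (Submodule.subset_span ⟨s, rfl⟩)

/-- The basis of `TS^d(K)` formed by the orbit sums, for `K` free with basis `b`. -/
noncomputable def symmetricTensorsBasis (d : ℕ) :
    Module.Basis (Sym ι d) A (symmetricTensors A K d) :=
  (Module.Basis.span (linearIndependent_orbitTensor b)).map
    (LinearEquiv.ofEq _ _ (span_range_orbitTensor b))

lemma coe_symmetricTensorsBasis (s : Sym ι d) :
    (symmetricTensorsBasis b d s : TensorPow A K d) = orbitTensor b s := by
  rw [symmetricTensorsBasis, Module.Basis.map_apply, LinearEquiv.coe_ofEq_apply,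
    Module.Basis.span_apply]

variable (B : Type*) [CommRing B] [Algebra A B]

lemma tensorPowCompare_orbitTensor (s : Sym ι d) :
    tensorPowCompare A K d B (orbitTensor b s) = orbitTensor (b.baseChange B) s := by
  simp only [orbitTensor, map_sum, tensorPowCompare_tprod]
  simp [Function.comp_def]

lemma symmetricTensorsBaseChange_symmetricTensorsBasis (c : B) (s : Sym ι d) :
    symmetricTensorsBaseChange A K d B (c ⊗ₜ symmetricTensorsBasis b d s) =
      c • orbitTensor (b.baseChange B) s := by
  rw [symmetricTensorsBaseChange_tmul, coe_symmetricTensorsBasis, tensorPowCompare_orbitTensor]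

lemma tprod_sum_smul_eq_sum_orbitTensor (c : ι → A) :
    PiTensorProduct.tprod A (fun _ : Fin d => ∑ i, c i • b i) =
      ∑ s : Sym ι d, ((s : Multiset ι).map c).prod • orbitTensor b s := by
  rw [MultilinearMap.map_sum, ← Finset.sum_fiberwise Finset.univ wordSym]
  refine Finset.sum_congr rfl fun s _ => ?_
  rw [orbitTensor, Finset.smul_sum]
  refine Finset.sum_congr rfl fun w hw => ?_
  rw [MultilinearMap.map_smul_univ, ← (Finset.mem_filter_univ w).mp hw]
  simp [wordSym, Function.comp_def, Finset.prod]

end OrbitBasis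

lemma symmetricTensorsBaseChange_injective_of_free {A : Type*} [CommRing A] {K : Type*}
    [AddCommGroup K] [Module A K] [Module.Free A K] [Module.Finite A K] (d : ℕ) (B : Type*)
    [CommRing B] [Algebra A B] :
    Function.Injective (symmetricTensorsBaseChange A K d B) := by
  classical
  let b := Module.Free.chooseBasis A K
  have : symmetricTensorsBaseChange A K d B =
      ((symmetricTensorsBasis b d).baseChange B).constr B (orbitTensor (b.baseChange B)) := by
    refine ((symmetricTensorsBasis b d).baseChange B).ext fun s => ?_
    rw [Module.Basis.constr_basis, Module.Basis.baseChange_apply,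
      symmetricTensorsBaseChange_symmetricTensorsBasis, one_smul]
  rw [this]
  exact Module.Basis.injective_constr_of_linearIndependent _ (linearIndependent_orbitTensor _)

theorem symmetricTensorsBaseChange_injective {A : Type u} [CommRing A] (M : Type*)
    [AddCommGroup M] [Module A M] [Module.Flat A M] (d : ℕ) (B : Type u) [CommRing B]
    [Algebra A B] : Function.Injective (symmetricTensorsBaseChange A M d B) := by
  refine (injective_iff_map_eq_zero _).mpr fun x hx => ?_
  obtain ⟨n, φ, x', rfl⟩ := exists_lTensor_symmetricTensorsMap_apply_eq x
  have map_φ_x' : (tensorPowMap d φ).lTensor B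
      ((symmetricTensors A (Fin n →₀ A) d).subtype.lTensor B x') = 0 := by
    refine liftBaseChange_tensorPowCompare_injective B ?_
    rw [map_zero, ← hx, symmetricTensorsBaseChange_eq_liftBaseChange, ← LinearMap.comp_apply,
      ← LinearMap.lTensor_comp, ← symmetricTensors.subtype_comp_map, LinearMap.lTensor_comp]
    rfl
  obtain ⟨k, u, ψ, rfl, hu⟩ := exists_factorization_lTensor_tensorPowMap_eq_zero φ _ map_φ_x'
  have map_u_x' : (symmetricTensors.map d u).lTensor B x' = 0 := by
    refine symmetricTensorsBaseChange_injective_of_free d B ?_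
    rw [map_zero, symmetricTensorsBaseChange_eq_liftBaseChange]
    refine (congrArg _ ?_).trans (map_zero _)
    change (Submodule.subtype _).lTensor B _ = 0
    rw [← LinearMap.comp_apply, ← LinearMap.lTensor_comp, symmetricTensors.subtype_comp_map,
      LinearMap.lTensor_comp, LinearMap.comp_apply, hu]
  rw [symmetricTensors.map_comp, LinearMap.lTensor_comp, LinearMap.comp_apply, map_u_x', map_zero]

/-- A polynomial law from `M` to `N` that is homogeneous of degree `d`. Unlike for Mathlib's
`PolynomialLaw`, the coefficient algebras, which lie in the universe of `A`, are rings. -/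
structure HomogeneousLaw (A : Type u) [CommRing A] (M : Type*) [AddCommGroup M] [Module A M]
    (N : Type*) [AddCommGroup N] [Module A N] (d : ℕ) where
  toFun : (B : Type u) → [CommRing B] → [Algebra A B] → B ⊗[A] M → B ⊗[A] N
  natural : ∀ (B B' : Type u) [CommRing B] [Algebra A B] [CommRing B'] [Algebra A B']
    (g : B →ₐ[A] B') (m : B ⊗[A] M),
      toFun B' (LinearMap.rTensor M g.toLinearMap m) =
        LinearMap.rTensor N g.toLinearMap (toFun B m)
  homogeneous : ∀ (B : Type u) [CommRing B] [Algebra A B] (c : B) (m : B ⊗[A] M),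
    toFun B (c • m) = c ^ d • toFun B m

section GenericElement

variable {A : Type u} [CommRing A] {K : Type*} [AddCommGroup K] [Module A K] {ι : Type}
  [Fintype ι] (b : Module.Basis ι A K)

/-- The generic element `∑ Xᵢ ⊗ bᵢ` of `A[X] ⊗ K`, of which every element of `B ⊗ K` is a
specialization. -/
noncomputable def genericElement : MvPolynomial ι A ⊗[A] K := ∑ i, MvPolynomial.X i ⊗ₜ b i

lemma repr_genericElement :
    ((b.baseChange (MvPolynomial ι A)).repr (genericElement b) : ι → MvPolynomial ι A) =
      MvPolynomial.X := by
  have : genericElement b =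
      ∑ i, (MvPolynomial.X i : MvPolynomial ι A) • b.baseChange (MvPolynomial ι A) i := by
    simp [genericElement, smul_tmul']
  rw [this, Module.Basis.repr_sum_self]

variable {B : Type*} [CommRing B] [Algebra A B]

lemma rTensor_genericElement (g : MvPolynomial ι A →ₐ[A] B) :
    g.toLinearMap.rTensor K (genericElement b) =
      ∑ i, g (MvPolynomial.X i) • b.baseChange B i := by
  simp [genericElement, smul_tmul']

lemma rTensor_aeval_genericElement (m : B ⊗[A] K) :
    (MvPolynomial.aeval ((b.baseChange B).repr m) : MvPolynomial ι A →ₐ[A] B).toLinearMap.rTensor K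
      (genericElement b) = m := by
  rw [rTensor_genericElement]
  simp only [MvPolynomial.aeval_X, (b.baseChange B).sum_repr]

end GenericElement

section Polynomial

variable {A : Type*} [CommRing A] {N : Type*} [AddCommGroup N] [Module A N] {ι : Type*} {d : ℕ}

lemma prod_map_X_eq_monomial (s : Multiset ι) [DecidableEq ι] :
    (s.map (MvPolynomial.X (R := A))).prod = MvPolynomial.monomial s.toFinsupp 1 := by
  induction s using Multiset.induction with
  | empty => simp
  | cons i s ih =>
    rw [Multiset.map_cons, Multiset.prod_cons, ih, ← Multiset.singleton_add, map_add,
      Multiset.toFinsupp_singleton, MvPolynomial.X, MvPolynomial.monomial_mul, one_mul]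

lemma lcoeff_comp_aeval_X_mul_C :
    (Polynomial.lcoeff (MvPolynomial ι A) d).restrictScalars A ∘ₗ
      (MvPolynomial.aeval fun i => Polynomial.X * Polynomial.C (MvPolynomial.X i) :
        MvPolynomial ι A →ₐ[A] Polynomial (MvPolynomial ι A)).toLinearMap =
    MvPolynomial.homogeneousComponent d := by
  refine (MvPolynomial.basisMonomials ι A).ext fun α => ?_
  have aeval_monomial : MvPolynomial.aeval (fun i => Polynomial.X * Polynomial.C (MvPolynomial.X i))
      (MvPolynomial.monomial α (1 : A)) =
      Polynomial.C (MvPolynomial.monomial α (1 : A)) * Polynomial.X ^ α.degree := by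
    rw [MvPolynomial.aeval_monomial, MvPolynomial.monomial_eq, Finsupp.degree_apply,
      ← Finset.prod_pow_eq_pow_sum, map_one, map_one, one_mul, one_mul, Finsupp.prod,
      Finsupp.prod, map_prod, ← Finset.prod_mul_distrib]
    exact Finset.prod_congr rfl fun i _ => by rw [mul_pow, map_pow, mul_comm]
  rw [MvPolynomial.coe_basisMonomials, MvPolynomial.homogeneousComponent_of_mem
    (MvPolynomial.isHomogeneous_monomial (1 : A) rfl : _ ∈ MvPolynomial.homogeneousSubmodule ι A _)]
  simp only [LinearMap.comp_apply, AlgHom.toLinearMap_apply, aeval_monomial,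
    LinearMap.restrictScalars_apply, Polynomial.lcoeff_apply, Polynomial.coeff_C_mul_X_pow]

lemma rTensor_lcoeff_X_pow_smul (R : Type*) [CommRing R] [Algebra A R] (z : R ⊗[A] N) :
    ((Polynomial.lcoeff R d).restrictScalars A).rTensor N
      ((Polynomial.X : Polynomial R) ^ d •
        (Polynomial.CAlgHom : R →ₐ[A] Polynomial R).toLinearMap.rTensor N z) = z := by
  induction z using TensorProduct.induction_on with
  | zero => simp only [map_zero, smul_zero]
  | tmul r y => simp [smul_tmul']
  | add x y hx hy => simp only [map_add, smul_add, hx, hy]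

variable [Fintype ι] [DecidableEq ι]

lemma homogeneousComponent_eq_sum (p : MvPolynomial ι A) :
    MvPolynomial.homogeneousComponent d p =
      ∑ s : Sym ι d, p.coeff (Multiset.toFinsupp (s : Multiset ι)) •
        ((s : Multiset ι).map MvPolynomial.X).prod := by
  ext α
  simp only [MvPolynomial.coeff_homogeneousComponent, MvPolynomial.coeff_sum,
    MvPolynomial.coeff_smul, prod_map_X_eq_monomial, MvPolynomial.coeff_monomial, smul_eq_mul,
    mul_ite, mul_one, mul_zero]
  split_ifs with hα
  · let s : Sym ι d := ⟨Finsupp.toMultiset α, by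
      rw [Finsupp.card_toMultiset, ← hα, Finsupp.degree_apply]; rfl⟩
    rw [Finset.sum_eq_single s]
    · simp [s]
    · exact fun s' _ hs' => if_neg fun h => hs' <| Subtype.ext <| Multiset.toFinsupp_eq_iff.mp h
    · simp
  · refine (Finset.sum_eq_zero fun s _ => if_neg fun hs => hα ?_).symm
    rw [← hs, Finsupp.degree_apply]
    exact (Multiset.toFinsupp_sum_eq _).trans s.2

lemma exists_rTensor_homogeneousComponent_eq_sum (z : MvPolynomial ι A ⊗[A] N) :
    ∃ ν : Sym ι d → N, (MvPolynomial.homogeneousComponent d).rTensor N z =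
      ∑ s : Sym ι d, ((s : Multiset ι).map MvPolynomial.X).prod ⊗ₜ ν s := by
  induction z using TensorProduct.induction_on with
  | zero => exact ⟨0, by simp⟩
  | add x y hx hy =>
    obtain ⟨ν, hν⟩ := hx
    obtain ⟨ν', hν'⟩ := hy
    exact ⟨ν + ν', by simp only [map_add, hν, hν', Pi.add_apply, tmul_add, Finset.sum_add_distrib]⟩
  | tmul p y =>
    exact ⟨fun s => p.coeff (Multiset.toFinsupp (s : Multiset ι)) • y, by
      simp only [LinearMap.rTensor_tmul, homogeneousComponent_eq_sum, sum_tmul, smul_tmul]⟩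

lemma sum_prod_map_X_tmul_injective : Function.Injective fun ν : Sym ι d → N =>
    ∑ s : Sym ι d, ((s : Multiset ι).map (MvPolynomial.X (R := A))).prod ⊗ₜ[A] ν s := by
  intro ν ν' h
  funext s
  have coeff_s := congrArg (TensorProduct.lid A N ∘
    (MvPolynomial.lcoeff A (Multiset.toFinsupp (s : Multiset ι))).rTensor N) h
  simpa [prod_map_X_eq_monomial, ite_smul] using coeff_s

end Polynomial

section FreeModule

variable {A : Type u} [CommRing A] {K : Type*} [AddCommGroup K] [Module A K] {ι : Type}
  [Fintype ι] (b : Module.Basis ι A K) {N : Type*} [AddCommGroup N] [Module A N] {d : ℕ}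

lemma HomogeneousLaw.rTensor_homogeneousComponent_genericElement (f : HomogeneousLaw A K N d) :
    (MvPolynomial.homogeneousComponent d).rTensor N (f.toFun _ (genericElement b)) =
      f.toFun _ (genericElement b) := by
  let scale : MvPolynomial ι A →ₐ[A] Polynomial (MvPolynomial ι A) :=
    MvPolynomial.aeval fun i => Polynomial.X * Polynomial.C (MvPolynomial.X i)
  have scale_generic : scale.toLinearMap.rTensor K (genericElement b) =
      (Polynomial.X : Polynomial (MvPolynomial ι A)) •
        Polynomial.CAlgHom.toLinearMap.rTensor K (genericElement b) := by
    simp only [rTensor_genericElement, Finset.smul_sum, smul_smul]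
    simp [scale]
  have scale_value := congrArg (f.toFun _) scale_generic
  rw [f.homogeneous, f.natural, f.natural] at scale_value
  rw [← lcoeff_comp_aeval_X_mul_C, LinearMap.rTensor_comp, LinearMap.comp_apply, scale_value,
    rTensor_lcoeff_X_pow_smul]

end FreeModule

namespace HomogeneousLaw

variable {A : Type u} [CommRing A] {M M' : Type*} [AddCommGroup M] [Module A M]
  [AddCommGroup M'] [Module A M'] {N : Type*} [AddCommGroup N] [Module A N] {d : ℕ}

/-- The linear map `ft : TS^d(M) → N` induces the law `f`: after every base change `A → B`, it
sends each preimage of `m^{⊗ d}` to the value of `f` at `m`. -/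
def Represents (f : HomogeneousLaw A M N d) (ft : symmetricTensors A M d →ₗ[A] N) : Prop :=
  ∀ (B : Type u) [CommRing B] [Algebra A B] (m : B ⊗[A] M) (x : B ⊗[A] symmetricTensors A M d),
    symmetricTensorsBaseChange A M d B x = PiTensorProduct.tprod B (fun _ => m) →
      ft.baseChange B x = f.toFun B m

/-- The pullback of a homogeneous law on `M` along a linear map `φ : M' → M`. -/
noncomputable def compLinear (f : HomogeneousLaw A M N d) (φ : M' →ₗ[A] M) :
    HomogeneousLaw A M' N d where
  toFun B _ _ m := f.toFun B (φ.baseChange B m)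
  natural B B' _ _ _ _ g m := by
    rw [← f.natural]
    congr 1
    exact LinearMap.congr_fun
      ((LinearMap.lTensor_comp_rTensor _ _ _).trans (LinearMap.rTensor_comp_lTensor _ _ _).symm) m
  homogeneous B _ _ c m := by rw [map_smul, f.homogeneous]

lemma compLinear_comp {M'' : Type*} [AddCommGroup M''] [Module A M'']
    (f : HomogeneousLaw A M N d) (φ : M' →ₗ[A] M) (u : M'' →ₗ[A] M') :
    f.compLinear (φ ∘ₗ u) = (f.compLinear φ).compLinear u := by
  simp only [compLinear, LinearMap.baseChange_comp, LinearMap.comp_apply]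

lemma Represents.comp_map {f : HomogeneousLaw A M N d} {ft : symmetricTensors A M d →ₗ[A] N}
    (h : f.Represents ft) (φ : M' →ₗ[A] M) :
    (f.compLinear φ).Represents (ft ∘ₗ symmetricTensors.map d φ) := by
  intro B _ _ m x hx
  rw [LinearMap.baseChange_comp, LinearMap.comp_apply]
  refine h B _ _ ?_
  rw [symmetricTensorsBaseChange_map, hx, PiTensorProduct.map_tprod]

section Free

variable {K : Type*} [AddCommGroup K] [Module A K] {ι : Type} [Fintype ι] [DecidableEq ι]

lemma symmetricTensorsBaseChange_sum_prod_repr_tmul (b : Module.Basis ι A K) (B : Type*)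
    [CommRing B] [Algebra A B] (m : B ⊗[A] K) :
    symmetricTensorsBaseChange A K d B (∑ s : Sym ι d,
      ((s : Multiset ι).map ((b.baseChange B).repr m)).prod ⊗ₜ symmetricTensorsBasis b d s) =
    PiTensorProduct.tprod B (fun _ => m) := by
  simp only [map_sum, symmetricTensorsBaseChange_symmetricTensorsBasis]
  rw [← tprod_sum_smul_eq_sum_orbitTensor, (b.baseChange B).sum_repr]

lemma exists_toFun_eq_sum_prod_repr_tmul (f : HomogeneousLaw A K N d)
    (b : Module.Basis ι A K) :
    ∃ ν : Sym ι d → N, ∀ (B : Type u) [CommRing B] [Algebra A B] (m : B ⊗[A] K),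
      f.toFun B m =
        ∑ s : Sym ι d, ((s : Multiset ι).map ((b.baseChange B).repr m)).prod ⊗ₜ ν s := by
  obtain ⟨ν, hν⟩ := exists_rTensor_homogeneousComponent_eq_sum (d := d)
    (f.toFun _ (genericElement b))
  rw [f.rTensor_homogeneousComponent_genericElement] at hν
  refine ⟨ν, fun B _ _ m => ?_⟩
  rw [← rTensor_aeval_genericElement b m, f.natural, hν, rTensor_aeval_genericElement, map_sum]
  refine Finset.sum_congr rfl fun s _ => ?_
  rw [LinearMap.rTensor_tmul, AlgHom.toLinearMap_apply, map_multiset_prod, Multiset.map_map]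
  simp only [Function.comp_def, MvPolynomial.aeval_X]

end Free

section FiniteBasis

variable {K : Type*} [AddCommGroup K] [Module A K] {ι : Type} [Finite ι]

lemma exists_represents_of_basis (f : HomogeneousLaw A K N d) (b : Module.Basis ι A K) :
    ∃ ft, f.Represents ft := by
  classical
  have := Fintype.ofFinite ι
  obtain ⟨ν, hν⟩ := f.exists_toFun_eq_sum_prod_repr_tmul b
  refine ⟨(symmetricTensorsBasis b d).constr A ν, fun B _ _ m x hx => ?_⟩
  have : Module.Free A K := .of_basis b
  have : Module.Finite A K := .of_basis b
  have x_eq := symmetricTensorsBaseChange_injective_of_free d B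
    (hx.trans (symmetricTensorsBaseChange_sum_prod_repr_tmul b B m).symm)
  simp only [x_eq, map_sum, LinearMap.baseChange_tmul, Module.Basis.constr_basis, hν]

lemma Represents.unique_of_basis {f : HomogeneousLaw A K N d}
    {ft ft' : symmetricTensors A K d →ₗ[A] N} (h : f.Represents ft) (h' : f.Represents ft')
    (b : Module.Basis ι A K) : ft = ft' := by
  classical
  have := Fintype.ofFinite ι
  have lifts_generic := symmetricTensorsBaseChange_sum_prod_repr_tmul (d := d) b _
    (genericElement b)
  have value_eq := (h _ _ _ lifts_generic).trans (h' _ _ _ lifts_generic).symm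
  simp only [repr_genericElement, map_sum, LinearMap.baseChange_tmul] at value_eq
  exact (symmetricTensorsBasis b d).ext (congrFun (sum_prod_map_X_tmul_injective value_eq))

end FiniteBasis

end HomogeneousLaw

section Gluing

variable {A : Type u} [CommRing A] {M : Type*} [AddCommGroup M] [Module A M] [Module.Flat A M]
  {N : Type*} [AddCommGroup N] [Module A N] {d : ℕ}

lemma symmetricTensors.exists_factorization_map_eq {n : ℕ} (φ : (Fin n →₀ A) →ₗ[A] M)
    {t t' : symmetricTensors A (Fin n →₀ A) d}
    (h : symmetricTensors.map d φ t = symmetricTensors.map d φ t') :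
    ∃ (k : ℕ) (u : (Fin n →₀ A) →ₗ[A] (Fin k →₀ A)) (ψ : (Fin k →₀ A) →ₗ[A] M),
      φ = ψ ∘ₗ u ∧ symmetricTensors.map d u t = symmetricTensors.map d u t' := by
  obtain ⟨k, u, ψ, hφ, hu⟩ := exists_factorization_tensorPowMap_eq_zero φ
    (fun _ : Unit => (t - t' : TensorPow A (Fin n →₀ A) d)) fun _ =>
      (map_sub _ _ _).trans (sub_eq_zero.mpr (congrArg Subtype.val h))
  exact ⟨k, u, ψ, hφ, Subtype.ext (sub_eq_zero.mp ((map_sub _ _ _).symm.trans (hu ())))⟩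

lemma symmetricTensors.exists_comp_map_eq
    (F : ∀ {n : ℕ}, ((Fin n →₀ A) →ₗ[A] M) → symmetricTensors A (Fin n →₀ A) d →ₗ[A] N)
    (hF : ∀ {n k : ℕ} (u : (Fin n →₀ A) →ₗ[A] (Fin k →₀ A)) (ψ : (Fin k →₀ A) →ₗ[A] M),
      F (ψ ∘ₗ u) = F ψ ∘ₗ symmetricTensors.map d u) :
    ∃ ft : symmetricTensors A M d →ₗ[A] N,
      ∀ {n : ℕ} (φ : (Fin n →₀ A) →ₗ[A] M), ft ∘ₗ symmetricTensors.map d φ = F φ := by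
  have F_congr {n n' : ℕ} {φ : (Fin n →₀ A) →ₗ[A] M} {φ' : (Fin n' →₀ A) →ₗ[A] M}
      {t : symmetricTensors A (Fin n →₀ A) d} {t' : symmetricTensors A (Fin n' →₀ A) d}
      (h : symmetricTensors.map d φ t = symmetricTensors.map d φ' t') : F φ t = F φ' t' := by
    obtain ⟨k, u, u', ψ, rfl, rfl⟩ := exists_common_factorization φ φ'
    rw [symmetricTensors.map_comp, symmetricTensors.map_comp] at h
    obtain ⟨l, v, χ, rfl, hv⟩ := symmetricTensors.exists_factorization_map_eq ψ h
    simp only [hF, LinearMap.comp_apply, hv]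
  choose n φ lift map_lift using symmetricTensors.exists_map_apply_eq (A := A) (M := M) (d := d)
  refine ⟨{ toFun t := F (φ t) (lift t), map_add' t t' := ?_, map_smul' c t := ?_ },
    fun {_} ψ => LinearMap.ext fun t => F_congr (map_lift _)⟩
  · obtain ⟨k, u, u', ψ, hu, hu'⟩ := exists_common_factorization (φ t) (φ t')
    rw [hu, hu', hF, hF, LinearMap.comp_apply, LinearMap.comp_apply, ← map_add]
    refine F_congr ?_
    rw [map_lift, map_add, ← LinearMap.comp_apply, ← LinearMap.comp_apply,
      ← symmetricTensors.map_comp, ← symmetricTensors.map_comp, ← hu, ← hu', map_lift, map_lift]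
  · rw [RingHom.id_apply, ← map_smul]
    exact F_congr (by rw [map_lift, map_smul, map_lift])

namespace HomogeneousLaw

theorem exists_represents (f : HomogeneousLaw A M N d) : ∃ ft, f.Represents ft := by
  choose F hF using fun (n : ℕ) (φ : (Fin n →₀ A) →ₗ[A] M) =>
    (f.compLinear φ).exists_represents_of_basis Finsupp.basisSingleOne
  obtain ⟨ft, hft⟩ := symmetricTensors.exists_comp_map_eq (fun {n} φ => F n φ) fun u ψ =>
    (hF _ _).unique_of_basis (compLinear_comp f ψ u ▸ (hF _ ψ).comp_map u) Finsupp.basisSingleOne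
  refine ⟨ft, fun B _ _ m x hx => ?_⟩
  obtain ⟨n, φ, m', rfl⟩ := exists_lTensor_apply_eq m
  obtain ⟨x', hx'⟩ : ∃ x', symmetricTensorsBaseChange A (Fin n →₀ A) d B x' =
      PiTensorProduct.tprod B fun _ => m' :=
    ⟨_, symmetricTensorsBaseChange_sum_prod_repr_tmul Finsupp.basisSingleOne B m'⟩
  have x_eq : x = (symmetricTensors.map d φ).baseChange B x' := by
    refine symmetricTensorsBaseChange_injective M d B ?_
    rw [symmetricTensorsBaseChange_map, hx', hx, PiTensorProduct.map_tprod]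
    rfl
  rw [x_eq, ← LinearMap.comp_apply, ← LinearMap.baseChange_comp, hft]
  exact hF n φ B m' x' hx'

theorem Represents.unique {f : HomogeneousLaw A M N d} {ft ft' : symmetricTensors A M d →ₗ[A] N}
    (h : f.Represents ft) (h' : f.Represents ft') : ft = ft' := by
  ext t
  obtain ⟨n, φ, t, rfl⟩ := symmetricTensors.exists_map_apply_eq t
  exact LinearMap.congr_fun
    ((h.comp_map φ).unique_of_basis (h'.comp_map φ) Finsupp.basisSingleOne) t

end HomogeneousLaw

end Gluing

/-- Let `M` be a flat `A`-module, `N` an `A`-module and `d ≥ 0`. Let `f` be a polynomial law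
from `M` to `N` (a natural family of maps `f_B : B ⊗_A M → B ⊗_A N` over commutative
`A`-algebras `B`) which is homogeneous of degree `d`. Then there is a unique `A`-linear map
`f̃ : TS^d_A(M) → N` such that for every `B` and every `m ∈ B ⊗_A M`, the base change of `f̃`
sends the unique element `x ∈ B ⊗_A TS^d_A(M)` corresponding (under the base-change
isomorphism onto `TS^d_B(B ⊗_A M)`, bijective by flatness) to the symmetric tensor `m^{⊗ d}`
to `f_B(m)`. -/
theorem polynomialLaw_homogeneous_factors (A : Type u) [CommRing A]
    (M : Type u) [AddCommGroup M] [Module A M] (N : Type u) [AddCommGroup N] [Module A N]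
    (d : ℕ) [Module.Flat A M]
    (f : (B : Type u) → [CommRing B] → [Algebra A B] → B ⊗[A] M → B ⊗[A] N)
    (hnat : ∀ (B B' : Type u) [CommRing B] [Algebra A B] [CommRing B'] [Algebra A B']
      (g : B →ₐ[A] B') (m : B ⊗[A] M),
        f B' (LinearMap.rTensor M g.toLinearMap m) = LinearMap.rTensor N g.toLinearMap (f B m))
    (hhom : ∀ (B : Type u) [CommRing B] [Algebra A B] (c : B) (m : B ⊗[A] M),
        f B (c • m) = c ^ d • f B m) :
    ∃! ft : symmetricTensors A M d →ₗ[A] N,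
      ∀ (B : Type u) [CommRing B] [Algebra A B] (m : B ⊗[A] M)
        (x : B ⊗[A] (symmetricTensors A M d)),
          symmetricTensorsBaseChange A M d B x = PiTensorProduct.tprod B (fun _ => m) →
          LinearMap.baseChange B ft x = f B m := by
  let law : HomogeneousLaw A M N d := ⟨f, hnat, hhom⟩
  obtain ⟨ft, ft_represents⟩ := law.exists_represents
  exact ⟨ft, ft_represents, fun _ ft'_represents =>
    HomogeneousLaw.Represents.unique (f := law) ft'_represents ft_represents⟩
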